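/- In the setting of the shell-summation lemmas, let Φ > 0 be a real number such that N_{1:p} ≤ Φ·Ñ_p for every p ∈ {1,…,p̃}. Then Ñ_1 ≤ (1 + 1/(Φ·ᾱ + χ))^{−(p̃−1)} · ᾱ · N_{1:p̃}. -/

import Mathlib

theorem aux_inj (s : Finset ℕ) (f : ℕ → ℕ) (g : ℕ → ℝ) (hg : Summable g) (h0 : ∀ j, 0 ≤ g j)
    (hf : Set.InjOn f s) : ∑ i ∈ s, g (f i) ≤ ∑' k, g k := by
  rw [← Finset.sum_image (f := g) hf]
  exact hg.sum_le_tsum _ (fun i _ => h0 i)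

theorem aux_abar (α : ℕ → ℝ) (hα : ∀ j, 0 < α j) (hsum : Summable α) (p j : ℕ) :
    ∑ q ∈ Finset.Icc 1 p, α (Nat.dist q j) ≤ α 0 + 2 * ∑' j : ℕ, α (j + 1) := by
  have hs1 : Summable (fun k => α (k + 1)) := (summable_nat_add_iff 1).2 hsum
  rw [← Finset.sum_filter_add_sum_filter_not _ (fun q => q ≤ j)]
  have h1 : ∑ q ∈ (Finset.Icc 1 p).filter (fun q => q ≤ j), α (Nat.dist q j) ≤ ∑' k, α k := by
    apply aux_inj _ (fun q => Nat.dist q j) α hsum (fun j => (hα j).le)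
    intro a ha b hb hab
    simp [Nat.dist] at ha hb hab
    omega
  have h2 : ∑ q ∈ (Finset.Icc 1 p).filter (fun q => ¬ q ≤ j), α (Nat.dist q j)
      ≤ ∑' k, α (k + 1) := by
    refine le_trans (le_of_eq ?_) (aux_inj ((Finset.Icc 1 p).filter (fun q => ¬ q ≤ j))
      (fun q => q - j - 1) _ hs1 (fun j => (hα _).le) ?_)
    · apply Finset.sum_congr rfl
      intro q hq
      simp at hq
      congr 1
      simp only [Nat.dist]
      omega
    · intro a ha b hb hab
      simp at ha hb hab
      omega
  have h3 := hsum.tsum_eq_zero_add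
  linarith

theorem aux_tail (α : ℕ → ℝ) (hα : ∀ j, 0 < α j) (hsum : Summable α) (p j : ℕ) (hj : p + 1 ≤ j) :
    ∑ q ∈ Finset.Icc 1 p, α (Nat.dist q j) ≤ ∑' q : ℕ, α (q + 1 + (Nat.dist (p + 1) j)) := by
  have hs1 : Summable (fun q => α (q + 1 + (Nat.dist (p + 1) j))) := by
    have := (summable_nat_add_iff (1 + Nat.dist (p + 1) j)).2 hsum
    simpa [add_assoc] using this
  refine le_trans (le_of_eq ?_) (aux_inj (Finset.Icc 1 p)
      (fun q => p - q) _ hs1 (fun j => (hα _).le) ?_)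
  · apply Finset.sum_congr rfl
    intro q hq
    simp at hq
    congr 1
    simp only [Nat.dist]
    omega
  · intro a ha b hb hab
    simp at ha hb hab
    omega

/-- Lemma 10 of the paper.
In the shell-summation setting (see Statement 7), if `Φ > 0` satisfies
`N_{1:p} ≤ Φ Ñ_p` for every `p ∈ {1,…,ptil}`, then
`Ñ_1 ≤ (1 + 1/(Φ abar + χ))^{-(ptil-1)} abar N_{1:ptil}`. -/
theorem stmt_9 (ptil : ℕ) (hptil : 1 ≤ ptil) (N : ℕ → ℝ) (hN : ∀ j, 0 ≤ N j)
    (α : ℕ → ℝ) (hα : ∀ j, 0 < α j) (hsum : Summable α)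
    (abar χ : ℝ) (habar : abar = α 0 + 2 * ∑' j : ℕ, α (j + 1))
    (hχ : 0 ≤ χ) (hχα : ∀ j : ℕ, ∑' q : ℕ, α (q + 1 + j) ≤ χ * α j)
    (Φ : ℝ) (hΦ : 0 < Φ)
    (hdom : ∀ p ∈ Finset.Icc 1 ptil,
      (∑ j ∈ Finset.Icc 1 p, N j) ≤ Φ * ∑ j ∈ Finset.Icc 1 ptil, α (Nat.dist p j) * N j) :
    ∑ j ∈ Finset.Icc 1 ptil, α (Nat.dist 1 j) * N j ≤
      (1 + 1 / (Φ * abar + χ)) ^ (-((ptil : ℤ) - 1)) * abar *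
        ∑ j ∈ Finset.Icc 1 ptil, N j := by
  set T : ℕ → ℝ := fun p => ∑ j ∈ Finset.Icc 1 ptil, α (Nat.dist p j) * N j with hT
  set S : ℕ → ℝ := fun p => ∑ q ∈ Finset.Icc 1 p, T q with hS
  have habar0 : 0 < abar := by
    have : 0 ≤ ∑' j : ℕ, α (j + 1) := tsum_nonneg (fun j => (hα _).le)
    have := hα 0
    linarith
  have hc : 0 < Φ * abar + χ := by positivity
  have hSw : ∀ p, S p = ∑ j ∈ Finset.Icc 1 ptil, (∑ q ∈ Finset.Icc 1 p, α (Nat.dist q j)) * N j := by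
    intro p
    simp only [hS, hT]
    rw [Finset.sum_comm]
    simp only [Finset.sum_mul]
  have hSfin : S ptil ≤ abar * ∑ j ∈ Finset.Icc 1 ptil, N j := by
    rw [hSw, Finset.mul_sum]
    apply Finset.sum_le_sum
    intro j _
    have := aux_abar α hα hsum ptil j
    rw [← habar] at this
    exact mul_le_mul_of_nonneg_right this (hN j)
  have hkey : ∀ p, p + 1 ≤ ptil → S p ≤ (Φ * abar + χ) * T (p + 1) := by
    intro p hp
    have h1 : S p ≤ abar * ∑ j ∈ Finset.Icc 1 (p + 1), N j + χ * T (p + 1) := by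
      have e : ∑ j ∈ Finset.Icc 1 (p + 1), N j
          = ∑ j ∈ Finset.Icc 1 ptil, if j ≤ p + 1 then N j else 0 := by
        rw [← Finset.sum_filter]
        apply Finset.sum_congr _ (fun _ _ => rfl)
        ext j
        simp
        omega
      rw [e, hSw, Finset.mul_sum]
      simp only [hT]
      rw [Finset.mul_sum, ← Finset.sum_add_distrib]
      apply Finset.sum_le_sum
      intro j _
      split_ifs with hj
      · have := aux_abar α hα hsum p j
        rw [← habar] at this
        have h2 := mul_le_mul_of_nonneg_right this (hN j)
        have h3 : 0 ≤ χ * (α (Nat.dist (p + 1) j) * N j) :=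
          mul_nonneg hχ (mul_nonneg (hα _).le (hN j))
        linarith
      · have := (aux_tail α hα hsum p j (by omega)).trans (hχα _)
        have h2 := mul_le_mul_of_nonneg_right this (hN j)
        linarith
    have h2 := hdom (p + 1) (Finset.mem_Icc.2 ⟨by omega, hp⟩)
    have h3 := mul_le_mul_of_nonneg_left h2 habar0.le
    change _ ≤ abar * (Φ * T (p + 1)) at h3
    linarith
  set r : ℝ := 1 + 1 / (Φ * abar + χ) with hr
  have hr0 : 0 < r := by positivity
  have hind : ∀ n, n + 1 ≤ ptil → r ^ n * T 1 ≤ S (n + 1) := by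
    intro n
    induction n with
    | zero => intro _; simp [hS]
    | succ n ih =>
      intro hn
      have h1 := ih (by omega)
      have h2 := hkey (n + 1) hn
      have h3 : S (n + 1 + 1) = S (n + 1) + T (n + 1 + 1) := by
        simp only [hS]
        rw [Finset.sum_Icc_succ_top (by omega)]
      have h4 : S (n + 1) / (Φ * abar + χ) ≤ T (n + 1 + 1) := by
        rw [div_le_iff₀ hc]; linarith
      have h5 : r * S (n + 1) = S (n + 1) + S (n + 1) / (Φ * abar + χ) := by
        rw [hr]; ring
      have h6 := mul_le_mul_of_nonneg_left h1 hr0.le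
      calc r ^ (n + 1) * T 1 = r * (r ^ n * T 1) := by ring
        _ ≤ _ := by linarith
  obtain ⟨m, rfl⟩ : ∃ m, ptil = m + 1 := ⟨ptil - 1, by omega⟩
  have hfin := (hind m le_rfl).trans hSfin
  have hexp : (-(((m + 1 : ℕ) : ℤ) - 1)) = -(m : ℤ) := by push_cast; ring
  rw [hexp, zpow_neg, zpow_natCast, mul_assoc]
  change T 1 ≤ _
  rw [inv_mul_eq_div, le_div_iff₀ (pow_pos hr0 m)]
  linarith
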